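/- Let k be a field, d, n ∈ ℕ, and a₁,…,aₙ ∈ ℕ^d. Let R be a commutative k-algebra equipped with an ℕ^d-grading R = ⊕_{b ∈ ℕ^d} R_b, generated as a k-algebra by homogeneous elements x₁,…,xₙ with xᵢ ∈ R_{aᵢ}, such that dim_k R_b = 1 whenever b lies in the submonoid ℕA of ℕ^d generated by a₁,…,aₙ, and R_b = 0 otherwise. If 𝓘 is an infinite collection of ideals of R that are homogeneous with respect to this grading, then there are two distinct ideals I, J ∈ 𝓘 with I ⊆ J. -/

import Mathlib

/-!
A homogeneous ideal is determined by the monomials in homogeneous generators that it contains: if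
the degree `b` part of the ring is nonzero, some nonzero monomial `m` has degree `b`, and since
this part is a line, every nonzero homogeneous element of degree `b` is a unit multiple of `m`.
Inclusion of homogeneous ideals is therefore inclusion of the upper sets of exponent vectors of
their monomials, and Maclagan's theorem says that upper sets of `ℕⁿ` are well-quasi-ordered by
reverse inclusion. For the latter, complements of upper sets are finite unions of boxes
`{w | ∀ i, w i < v i}` with `v i ∈ ℕ ∪ {∞}`; the corners `v` are well-quasi-ordered by Dickson's
lemma, hence so are finite lists of corners by Higman's lemma.
-/

section WellQuasiOrder

theorem wellQuasiOrdered_sublistForall₂ {β : Type*} {r : β → β → Prop} [IsPreorder β r]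
    (hr : WellQuasiOrdered r) : WellQuasiOrdered (List.SublistForall₂ r) := by
  have huniv := Set.partiallyWellOrderedOn_of_wellQuasiOrdered hr Set.univ
  exact fun _ => (huniv.partiallyWellOrderedOn_sublistForall₂ r).exists_lt
    fun _ _ _ => Set.mem_univ _

theorem exists_mem_rel_of_sublistForall₂ {β γ : Type*} {r : β → γ → Prop} {l : List β}
    {l' : List γ} (h : List.SublistForall₂ r l l') : ∀ v ∈ l, ∃ v' ∈ l', r v v' := by
  induction h with
  | nil => simp
  | cons _ _ ih => simp_all
  | cons_right _ ih => exact fun v hv => (ih v hv).imp fun _ h => ⟨List.mem_cons_of_mem _ h.1, h.2⟩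

theorem exists_finite_upperClosure_eq {β : Type*} [PartialOrder β] [WellQuasiOrderedLE β]
    (U : UpperSet β) : ∃ s : Set β, s.Finite ∧ upperClosure s = U := by
  refine ⟨{g | Minimal (· ∈ U) g},
    WellQuasiOrderedLE.finite_of_isAntichain (setOfPred_minimal_antichain _), ?_⟩
  ext w
  constructor
  · rintro ⟨g, hg, hgw⟩
    exact U.upper hgw hg.prop
  · intro hw
    obtain ⟨g, hgw, hg⟩ := exists_minimal_le_of_wellFoundedLT (· ∈ U) w hw
    exact ⟨g, hg, hgw⟩

theorem exists_ne_le_of_infinite {β : Type*} [Preorder β] [WellQuasiOrderedLE β] {s : Set β}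
    (hs : s.Infinite) : ∃ a ∈ s, ∃ b ∈ s, a ≠ b ∧ a ≤ b := by
  by_contra! h
  exact hs (WellQuasiOrderedLE.finite_of_isAntichain fun a ha b hb => h a ha b hb)

end WellQuasiOrder

section Boxes

variable {σ : Type*} {α : σ → Type*}

section Preorder

variable [∀ i, Preorder (α i)]

/-- The union of the boxes `{w | ∀ i, w i < v i}` with corners `v ∈ L`, as a lower set. Corner
coordinates may be infinite, and corners are listed so that Higman's lemma applies to them. -/
def boxUnion (L : List (∀ i, WithTop (α i))) : LowerSet (∀ i, α i) where
  carrier := {w | ∃ v ∈ L, ∀ i, (w i : WithTop (α i)) < v i}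
  lower' _ _ hle := fun ⟨v, hv, hlt⟩ =>
    ⟨v, hv, fun i => (WithTop.coe_le_coe.2 (hle i)).trans_lt (hlt i)⟩

theorem mem_boxUnion {L : List (∀ i, WithTop (α i))} {w : ∀ i, α i} :
    w ∈ boxUnion L ↔ ∃ v ∈ L, ∀ i, (w i : WithTop (α i)) < v i :=
  Iff.rfl

theorem boxUnion_le_boxUnion {L L' : List (∀ i, WithTop (α i))}
    (h : List.SublistForall₂ (· ≤ ·) L L') : boxUnion L ≤ boxUnion L' := by
  rintro w ⟨v, hv, hwv⟩
  obtain ⟨v', hv', hle⟩ := exists_mem_rel_of_sublistForall₂ h v hv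
  exact ⟨v', hv', fun i => (hwv i).trans_le (hle i)⟩

theorem boxUnion_singleton_top : boxUnion [(⊤ : ∀ i, WithTop (α i))] = ⊤ := by
  ext w
  simp [mem_boxUnion, WithTop.coe_lt_top]

end Preorder

variable [∀ i, LinearOrder (α i)]

theorem boxUnion_inf_boxUnion (L L' : List (∀ i, WithTop (α i))) :
    boxUnion L ⊓ boxUnion L' = boxUnion ((L ×ˢ L').map fun p => p.1 ⊓ p.2) := by
  ext w
  simp only [SetLike.mem_coe, LowerSet.mem_inf_iff, mem_boxUnion, List.mem_map, Prod.exists,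
    List.mem_product]
  constructor
  · rintro ⟨⟨u, hu, hwu⟩, v, hv, hwv⟩
    exact ⟨_, ⟨u, v, ⟨hu, hv⟩, rfl⟩, fun i => lt_inf_iff.2 ⟨hwu i, hwv i⟩⟩
  · rintro ⟨_, ⟨u, v, ⟨hu, hv⟩, rfl⟩, hw⟩
    exact ⟨⟨u, hu, fun i => (lt_inf_iff.1 (hw i)).1⟩, v, hv, fun i => (lt_inf_iff.1 (hw i)).2⟩

theorem exists_boxUnion_eq_compl_Ici [Finite σ] (g : ∀ i, α i) :
    ∃ L, boxUnion L = (UpperSet.Ici g).compl := by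
  classical
  cases nonempty_fintype σ
  let corner (i : σ) : ∀ j, WithTop (α j) := Function.update ⊤ i (g i : WithTop (α i))
  have lt_corner_iff (w : ∀ i, α i) (i : σ) :
      (∀ j, (w j : WithTop (α j)) < corner i j) ↔ w i < g i := by
    rw [Function.forall_update_iff _ fun j v => (w j : WithTop (α j)) < v]
    simp [WithTop.coe_lt_top]
  refine ⟨Finset.univ.toList.map corner, ?_⟩
  ext w
  simp [mem_boxUnion, lt_corner_iff, Pi.le_def]

theorem exists_boxUnion_eq_compl_upperClosure [Finite σ] {s : Set (∀ i, α i)} (hs : s.Finite) :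
    ∃ L, boxUnion L = (upperClosure s).compl := by
  induction s, hs using Set.Finite.induction_on with
  | empty => exact ⟨[⊤], by rw [boxUnion_singleton_top, upperClosure_empty, UpperSet.compl_top]⟩
  | @insert g s _ _ ih =>
    obtain ⟨L, hL⟩ := exists_boxUnion_eq_compl_Ici g
    obtain ⟨L', hL'⟩ := ih
    refine ⟨_, (boxUnion_inf_boxUnion L L').symm.trans ?_⟩
    rw [hL, hL', Set.insert_eq, upperClosure_union, upperClosure_singleton, UpperSet.compl_inf]

variable [Finite σ] [∀ i, WellFoundedLT (α i)]

theorem boxUnion_surjective :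
    Function.Surjective (boxUnion : List (∀ i, WithTop (α i)) → LowerSet (∀ i, α i)) := by
  intro D
  obtain ⟨s, hs, hsD⟩ := exists_finite_upperClosure_eq D.compl
  obtain ⟨L, hL⟩ := exists_boxUnion_eq_compl_upperClosure hs
  exact ⟨L, by rw [hL, hsD, LowerSet.compl_compl]⟩

instance wellQuasiOrderedLE_lowerSet_pi : WellQuasiOrderedLE (LowerSet (∀ i, α i)) :=
  ⟨(wellQuasiOrdered_sublistForall₂ wellQuasiOrdered_le).of_surjective
    ⟨boxUnion, boxUnion_le_boxUnion⟩ boxUnion_surjective⟩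

-- `UpperSet` is ordered by reverse inclusion, so this is Maclagan's theorem when `α i = ℕ`.
instance wellQuasiOrderedLE_upperSet_pi : WellQuasiOrderedLE (UpperSet (∀ i, α i)) :=
  upperSetIsoLowerSet.wellQuasiOrderedLE_iff.2 inferInstance

end Boxes

section Monomials

variable {σ R : Type*} [Fintype σ] [CommSemiring R]

/-- The exponent vectors of the monomials in the elements `x i` that lie in the ideal `I`. They
form an upper set because `I` absorbs multiplication. -/
def monomialExponents (x : σ → R) (I : Ideal R) : UpperSet (σ → ℕ) where
  carrier := {w | ∏ i, x i ^ w i ∈ I}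
  upper' _ _ hle hv := I.mem_of_dvd (Finset.prod_dvd_prod_of_dvd _ _ fun i _ =>
    pow_dvd_pow (x i) (hle i)) hv

theorem monomialExponents_le_iff {x : σ → R} {I J : Ideal R} :
    monomialExponents x I ≤ monomialExponents x J ↔
      ∀ m ∈ Submonoid.closure (Set.range x), m ∈ J → m ∈ I := by
  simp only [Submonoid.mem_closure_range_iff_of_fintype, forall_exists_index,
    forall_eq_apply_imp_iff]
  exact Iff.rfl

end Monomials

section Graded

theorem exists_mem_closure_mem_ne_zero {ι S R : Type*} [AddCommMonoid ι] [DecidableEq ι]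
    [CommSemiring R] [SetLike S R] [AddSubmonoidClass S R] (𝒜 : ι → S) [GradedRing 𝒜] {s : Set R}
    (hs : ∀ y ∈ s, SetLike.IsHomogeneousElem 𝒜 y) (hadj : Algebra.adjoin (𝒜 0) s = ⊤)
    {b : ι} {r : R} (hr : r ∈ 𝒜 b) (hr0 : r ≠ 0) :
    ∃ m ∈ Submonoid.closure s, m ∈ 𝒜 b ∧ m ≠ 0 := by
  by_contra! h
  have hom_closure : Submonoid.closure s ≤ SetLike.homogeneousSubmonoid 𝒜 :=
    Submonoid.closure_le.2 hs
  have hspan : r ∈ Submodule.span (𝒜 0) (Submonoid.closure s : Set R) := by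
    rw [← Algebra.adjoin_eq_span, hadj]
    trivial
  suffices hcomp : ∀ y ∈ Submodule.span (𝒜 0) (Submonoid.closure s : Set R),
      (DirectSum.decompose 𝒜 y b : R) = 0 from
    hr0 (by rw [← DirectSum.decompose_of_mem_same 𝒜 hr, hcomp r hspan])
  intro y hy
  induction hy using Submodule.span_induction with
  | mem m hm =>
    obtain ⟨c, hmc⟩ := hom_closure hm
    rcases eq_or_ne c b with rfl | hcb
    · simp [h m hm hmc]
    · exact DirectSum.decompose_of_mem_ne 𝒜 hmc hcb
  | zero => simp
  | add y z _ _ hy hz => simp [hy, hz]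
  | smul c y _ hy =>
    rw [Algebra.smul_def, SetLike.GradeZero.algebraMap_apply,
      DirectSum.coe_decompose_mul_of_left_mem_zero 𝒜 c.2, hy, mul_zero]

theorem exists_units_smul_eq_of_rank_le_one {k V : Type*} [DivisionRing k] [AddCommGroup V]
    [Module k V] (hdim : Module.rank k V ≤ 1) {v w : V} (hv : v ≠ 0) (hw : w ≠ 0) :
    ∃ c : kˣ, c • v = w := by
  obtain ⟨u, hu⟩ := rank_le_one_iff.1 hdim
  obtain ⟨a, rfl⟩ := hu v
  obtain ⟨b, rfl⟩ := hu w
  have ha : a ≠ 0 := left_ne_zero_of_smul hv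
  have hb : b ≠ 0 := left_ne_zero_of_smul hw
  refine ⟨.mk0 (b / a) (div_ne_zero hb ha), ?_⟩
  rw [Units.smul_mk0, smul_smul, div_mul_cancel₀ b ha]

variable {k ι R : Type*} [Field k] [AddCommMonoid ι] [DecidableEq ι] [CommRing R] [Algebra k R]
  {𝒜 : ι → Submodule k R} [GradedAlgebra 𝒜]

theorem exists_mem_closure_units_smul_eq (hdim : ∀ b, Module.rank k (𝒜 b) ≤ 1) {s : Set R}
    (hs : ∀ y ∈ s, SetLike.IsHomogeneousElem 𝒜 y) (hadj : Algebra.adjoin (𝒜 0) s = ⊤)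
    {r : R} (hr : SetLike.IsHomogeneousElem 𝒜 r) (hr0 : r ≠ 0) :
    ∃ m ∈ Submonoid.closure s, ∃ c : kˣ, c • r = m := by
  obtain ⟨b, hrb⟩ := hr
  obtain ⟨m, hm, hmb, hm0⟩ := exists_mem_closure_mem_ne_zero 𝒜 hs hadj hrb hr0
  obtain ⟨c, hc⟩ := exists_units_smul_eq_of_rank_le_one (hdim b)
    (v := ⟨r, hrb⟩) (w := ⟨m, hmb⟩) (by simpa using hr0) (by simpa using hm0)
  exact ⟨m, hm, c, congrArg Subtype.val hc⟩

theorem homogeneousIdeal_le_of_forall_mem_closure (hdim : ∀ b, Module.rank k (𝒜 b) ≤ 1)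
    {s : Set R} (hs : ∀ y ∈ s, SetLike.IsHomogeneousElem 𝒜 y)
    (hadj : Algebra.adjoin (𝒜 0) s = ⊤) {I J : HomogeneousIdeal 𝒜}
    (h : ∀ m ∈ Submonoid.closure s, m ∈ J.toIdeal → m ∈ I.toIdeal) : J ≤ I := by
  intro r hr
  refine (I.isHomogeneous.mem_iff 𝒜).2 fun b => ?_
  have hrJ : (DirectSum.decompose 𝒜 r b : R) ∈ J.toIdeal := J.isHomogeneous b hr
  by_cases hr0 : (DirectSum.decompose 𝒜 r b : R) = 0
  · rw [hr0]
    exact zero_mem _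
  · obtain ⟨m, hm, c, hc⟩ :=
      exists_mem_closure_units_smul_eq hdim hs hadj ⟨b, SetLike.coe_mem _⟩ hr0
    have hmI := h m hm (hc ▸ (Submodule.smul_mem_iff' J.toIdeal c).2 hrJ)
    rwa [← hc, Submodule.smul_mem_iff'] at hmI

theorem wellQuasiOrderedLE_orderDual_homogeneousIdeal [Algebra.FiniteType k R]
    (hdim : ∀ b, Module.rank k (𝒜 b) ≤ 1) : WellQuasiOrderedLE (HomogeneousIdeal 𝒜)ᵒᵈ := by
  have : IsScalarTower k (𝒜 0) R := .of_algebraMap_eq fun _ => rfl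
  have : Algebra.FiniteType (𝒜 0) R := .of_restrictScalars_finiteType k _ _
  obtain ⟨s, hadj, hs⟩ := GradedAlgebra.exists_finset_adjoin_eq_top_and_homogeneous 𝒜
  let x : s → R := Subtype.val
  refine ⟨fun I => ?_⟩
  obtain ⟨p, q, hpq, hle⟩ :=
    wellQuasiOrdered_le fun j => monomialExponents x (OrderDual.ofDual (I j)).toIdeal
  rw [monomialExponents_le_iff, Subtype.range_coe] at hle
  exact ⟨p, q, hpq, homogeneousIdeal_le_of_forall_mem_closure hdim hs hadj hle⟩

end Graded

theorem aGradedAlgebra_homogeneousIdeals_no_infinite_antichain_general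
    {k ι R : Type*} [Field k] [AddCommMonoid ι] [DecidableEq ι] [CommRing R] [Algebra k R]
    [Algebra.FiniteType k R] (𝒜 : ι → Submodule k R) [GradedAlgebra 𝒜]
    (hdim : ∀ b, Module.rank k (𝒜 b) ≤ 1)
    (𝓘 : Set (Ideal R)) (hhom : ∀ I ∈ 𝓘, Ideal.IsHomogeneous 𝒜 I) (hinf : 𝓘.Infinite) :
    ∃ I ∈ 𝓘, ∃ J ∈ 𝓘, I ≠ J ∧ I ≤ J := by
  have := wellQuasiOrderedLE_orderDual_homogeneousIdeal hdim
  let bundle (I : 𝓘) : (HomogeneousIdeal 𝒜)ᵒᵈ := OrderDual.toDual ⟨I, hhom I I.2⟩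
  have bundle_injective : Function.Injective bundle := fun I J h =>
    Subtype.ext (congrArg (fun K => (OrderDual.ofDual K).toIdeal) h)
  have := hinf.to_subtype
  obtain ⟨_, ⟨I, rfl⟩, _, ⟨J, rfl⟩, hne, hle⟩ :=
    exists_ne_le_of_infinite (Set.infinite_range_of_injective bundle_injective)
  exact ⟨J, J.2, I, I.2, fun h => hne (congrArg bundle (Subtype.ext h.symm)), hle⟩

/-- **Antichains of homogeneous ideals in an A-graded algebra are finite.**
Let `R` be a commutative `k`-algebra with an `ℕ^d`-grading `𝒜`, generated as a
`k`-algebra by homogeneous elements `x₁,…,xₙ` with `xᵢ ∈ 𝒜 (a i)`, such that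
`dim_k R_b = 1` for `b` in the submonoid `ℕA` of `ℕ^d` generated by the `a i`,
and `R_b = 0` otherwise.  Then any infinite collection of homogeneous ideals of
`R` contains two distinct ideals `I ⊆ J`. -/
theorem aGradedAlgebra_homogeneousIdeals_no_infinite_antichain
    {k : Type*} [Field k] {d n : ℕ} (a : Fin n → (Fin d → ℕ))
    {R : Type*} [CommRing R] [Algebra k R]
    (𝒜 : (Fin d → ℕ) → Submodule k R) [GradedAlgebra 𝒜]
    (x : Fin n → R) (hx : ∀ i, x i ∈ 𝒜 (a i))
    (hgen : Algebra.adjoin k (Set.range x) = ⊤)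
    (hdim1 : ∀ b ∈ AddSubmonoid.closure (Set.range a), Module.rank k (𝒜 b) = 1)
    (hdim0 : ∀ b ∉ AddSubmonoid.closure (Set.range a), 𝒜 b = ⊥)
    (𝓘 : Set (Ideal R)) (hhom : ∀ I ∈ 𝓘, Ideal.IsHomogeneous 𝒜 I)
    (hinf : 𝓘.Infinite) :
    ∃ I ∈ 𝓘, ∃ J ∈ 𝓘, I ≠ J ∧ I ≤ J := by
  have : Algebra.FiniteType k R := ⟨(Set.finite_range x).toFinset, by simpa using hgen⟩
  refine aGradedAlgebra_homogeneousIdeals_no_infinite_antichain_general 𝒜 (fun b => ?_) 𝓘 hhom hinf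
  by_cases hb : b ∈ AddSubmonoid.closure (Set.range a)
  · exact (hdim1 b hb).le
  · rw [hdim0 b hb, rank_bot]
    exact zero_le_one
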